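/- arXiv:2307.12720 — 8 statements merged into one kernel-verified Lean document; each statement's English description precedes it below -/
import Mathlib

section
/- For every integer m ≥ 3, the number of OT-admissible words of length m over Fin 8 satisfies the recursion N8(m) = 5·N8(m−1) + 5·N8(m−2); moreover N8(1) = 8 and N8(2) = 50 (so that the recursion also holds at m = 2 with the convention N8(0) = 2). -/
namespace OTLOCO

/-- Levels of GF(8): `0,1,α,α²,α³,α⁴,α⁵,α⁶` correspond to `0,…,7`. -/
def B1 : Finset (Fin 8) := {0, 1, 4, 5}
def B2 : Finset (Fin 8) := {2, 3, 6, 7}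

/-- Forbidden 2-tuples of `OT⁸`, read left-to-right. -/
def OTpair (a b : Fin 8) : Prop :=
  (a = 2 ∧ b ∈ B1) ∨ (a ∈ B1 ∧ b = 2) ∨ (a = 5 ∧ b ∈ B2) ∨ (a ∈ B2 ∧ b = 5)

/-- Forbidden 3-tuples of `OT⁸`, read left-to-right. -/
def OTtriple (a x b : Fin 8) : Prop :=
  (a ∈ ({0, 1, 4} : Finset (Fin 8)) ∧ x ∈ ({3, 6} : Finset (Fin 8)) ∧
    b ∈ ({0, 1, 4} : Finset (Fin 8))) ∨
  (a ∈ ({3, 6, 7} : Finset (Fin 8)) ∧ x ∈ ({1, 4} : Finset (Fin 8)) ∧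
    b ∈ ({3, 6, 7} : Finset (Fin 8)))

instance (a b : Fin 8) : Decidable (OTpair a b) := by unfold OTpair; infer_instance
instance (a x b : Fin 8) : Decidable (OTtriple a x b) := by unfold OTtriple; infer_instance

/-- A word `w : Fin m → Fin 8` (index `0` is the leftmost symbol) is OT-admissible
if it contains no element of `OT⁸` as a contiguous subword. -/
def OTadm {m : ℕ} (w : Fin m → Fin 8) : Prop :=
  (∀ i j : Fin m, (j : ℕ) = (i : ℕ) + 1 → ¬ OTpair (w i) (w j)) ∧
  (∀ i j k : Fin m, (j : ℕ) = (i : ℕ) + 1 → (k : ℕ) = (i : ℕ) + 2 →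
    ¬ OTtriple (w i) (w j) (w k))

instance {m : ℕ} : DecidablePred (@OTadm m) := fun w => by
  unfold OTadm; infer_instance

/-- Number of OT-admissible words of length `m`, with the convention `N8 0 = 2`. -/
def N8 (m : ℕ) : ℕ :=
  if m = 0 then 2
  else (Finset.univ.filter (fun w : Fin m → Fin 8 => OTadm w)).card

/-- Continuation counts `(p, s)` for the two classes of states. -/
def ps : ℕ → ℕ × ℕ
  | 0 => (1, 1)
  | n + 1 => (4 * (ps n).1 + 3 * (ps n).2, 3 * (ps n).1 + (ps n).2)

/-- Restricted states: the last letter is 2 or 5, or the last step crossed into a bad middle. -/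
def st (a b : Fin 8) : Bool :=
  decide (b = 2 ∨ b = 5 ∨ (a ∈ ({0, 1, 4} : Finset (Fin 8)) ∧ b ∈ ({3, 6} : Finset (Fin 8))) ∨
    (a ∈ ({3, 6, 7} : Finset (Fin 8)) ∧ b ∈ ({1, 4} : Finset (Fin 8))))

def cP (a b : Fin 8) : ℕ := if OTpair a b then 0 else if st a b then 0 else 1
def cS (a b : Fin 8) : ℕ := if OTpair a b then 0 else if st a b then 1 else 0

lemma sumP : ∀ a b : Fin 8, ¬ OTpair a b →
    ∑ c, (if OTtriple a b c then 0 else cP b c) = if st a b then 3 else 4 := by decide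

lemma sumS : ∀ a b : Fin 8, ¬ OTpair a b →
    ∑ c, (if OTtriple a b c then 0 else cS b c) = if st a b then 1 else 3 := by decide

lemma card_cons {n : ℕ} (P : (Fin (n + 1) → Fin 8) → Prop) [DecidablePred P] :
    (Finset.univ.filter P).card
      = ∑ c, (Finset.univ.filter (fun w : Fin n → Fin 8 => P (Fin.cons c w))).card := by
  simp only [Finset.card_filter]
  rw [← (Fin.consEquiv (fun _ : Fin (n + 1) => Fin 8)).sum_comp, Fintype.sum_prod_type]
  rfl

lemma adm_cons {n : ℕ} (a b c : Fin 8) (w : Fin n → Fin 8) :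
    OTadm (Fin.cons a (Fin.cons b (Fin.cons c w : Fin (n + 1) → Fin 8) : Fin (n + 2) → Fin 8)
        : Fin (n + 3) → Fin 8) ↔
      ¬ OTpair a b ∧ ¬ OTtriple a b c ∧
        OTadm (Fin.cons b (Fin.cons c w : Fin (n + 1) → Fin 8) : Fin (n + 2) → Fin 8) := by
  constructor
  · rintro ⟨h1, h2⟩
    refine ⟨h1 0 1 (by simp), h2 0 1 2 (by simp) ?_, ?_, ?_⟩
    · simp
    · intro i j hij
      exact h1 i.succ j.succ (by simp [hij])
    · intro i j k hij hik
      exact h2 i.succ j.succ k.succ (by simp [hij]) (by simp [hik])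
  · rintro ⟨hp, ht, h1, h2⟩
    constructor
    · intro i j hij
      induction j using Fin.cases with
      | zero => simp at hij
      | succ j =>
        induction i using Fin.cases with
        | zero =>
          obtain rfl : j = 0 := by ext; simpa using hij
          exact hp
        | succ i => exact h1 i j (by simpa using hij)
    · intro i j k hij hik
      induction j using Fin.cases with
      | zero => simp at hij
      | succ j =>
        induction k using Fin.cases with
        | zero => simp at hik
        | succ k =>
          induction i using Fin.cases with
          | zero =>
            obtain rfl : j = 0 := by ext; simpa using hij
            obtain rfl : k = 1 := by ext; simpa using hik
            exact ht
          | succ i => exact h2 i j k (by simpa using hij) (by simp at hik; omega)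

/-- Number of admissible words of length `n + 2` starting with `a, b`. -/
def A (n : ℕ) (a b : Fin 8) : ℕ :=
  (Finset.univ.filter (fun w : Fin n → Fin 8 =>
    OTadm (Fin.cons a (Fin.cons b w : Fin (n + 1) → Fin 8) : Fin (n + 2) → Fin 8))).card

lemma A_succ (n : ℕ) (a b : Fin 8) :
    A (n + 1) a b = if OTpair a b then 0 else ∑ c, if OTtriple a b c then 0 else A n b c := by
  unfold A
  rw [card_cons]
  simp only [adm_cons]
  split_ifs with h
  · simp [h]
  · refine Finset.sum_congr rfl fun c _ => ?_
    split_ifs with h' <;> simp [h, h']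

lemma adm_two (a b : Fin 8) (w : Fin 0 → Fin 8) :
    OTadm (Fin.cons a (Fin.cons b w : Fin 1 → Fin 8) : Fin 2 → Fin 8) ↔ ¬ OTpair a b := by
  constructor
  · intro h
    exact h.1 0 1 (by simp)
  · intro h
    constructor
    · intro i j hij
      obtain rfl : i = 0 := by ext; simp; omega
      obtain rfl : j = 1 := by ext; simpa using hij
      exact h
    · intro i j k _ hk
      omega

lemma A_eq (n : ℕ) : ∀ a b, A n a b = cP a b * (ps n).1 + cS a b * (ps n).2 := by
  induction n with
  | zero =>
    intro a b
    unfold A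
    simp only [adm_two, ps, cP, cS]
    split_ifs with h h' <;> simp [h]
  | succ n ih =>
    intro a b
    rw [A_succ]
    by_cases h : OTpair a b
    · simp [h, cP, cS]
    · have key : (∑ c, if OTtriple a b c then 0 else A n b c)
          = (∑ c, (if OTtriple a b c then 0 else cP b c)) * (ps n).1
            + (∑ c, (if OTtriple a b c then 0 else cS b c)) * (ps n).2 := by
        rw [Finset.sum_mul, Finset.sum_mul, ← Finset.sum_add_distrib]
        refine Finset.sum_congr rfl fun c _ => ?_
        rw [ih]
        split_ifs <;> simp
      rw [if_neg h, key, sumP a b h, sumS a b h]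
      simp only [cP, cS, ps, if_neg h]
      split_ifs <;> ring

lemma N8_one : N8 1 = 8 := by
  have h : ∀ w : Fin 1 → Fin 8, OTadm w := by
    intro w
    constructor
    · intro i j hij
      omega
    · intro i j k hij
      omega
  simp [N8, h]

lemma N8_eq : ∀ n, N8 n = 2 * (ps n).2
  | 0 => rfl
  | 1 => by rw [N8_one]; rfl
  | n + 2 => by
    have h : N8 (n + 2) = ∑ a, ∑ b, A n a b := by
      unfold N8 A
      rw [if_neg (by omega), card_cons]
      refine Finset.sum_congr rfl fun a _ => ?_
      rw [card_cons]
    have hP : ∑ a, ∑ b, cP a b = 30 := by decide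
    have hS : ∑ a, ∑ b, cS a b = 20 := by decide
    rw [h]
    simp only [A_eq, Finset.sum_add_distrib, ← Finset.sum_mul, hP, hS, ps]
    ring

theorem N8_recursion :
    (∀ m : ℕ, 2 ≤ m → N8 m = 5 * N8 (m - 1) + 5 * N8 (m - 2)) ∧
    N8 1 = 8 ∧ N8 2 = 50 := by
  refine ⟨?_, N8_one, by rw [N8_eq]; rfl⟩
  intro m hm
  obtain ⟨n, rfl⟩ : ∃ n, m = n + 2 := ⟨m - 2, by omega⟩
  rw [show n + 2 - 1 = n + 1 by omega, show n + 2 - 2 = n by omega]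
  simp only [N8_eq, ps]
  ring

end OTLOCO
end

section
/- The map on words over Fin 8 that replaces every symbol ℓ by 7−ℓ is an involutive bijection from the set of OT-admissible words of length m onto itself. Consequently, for each ℓ ∈ Fin 8 and each m ≥ 1, the number of OT-admissible words of length m whose leftmost symbol equals ℓ is equal to the number of OT-admissible words of length m whose leftmost symbol equals 7−ℓ. -/
namespace OTLOCO

/-- The symbol-wise complement `ℓ ↦ 7 − ℓ`. -/
def complW {m : ℕ} (w : Fin m → Fin 8) : Fin m → Fin 8 :=
  fun i => ⟨7 - (w i).val, by omega⟩

theorem pair_compl : ∀ a b : Fin 8,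
    OTpair ⟨7 - a.val, by omega⟩ ⟨7 - b.val, by omega⟩ ↔ OTpair a b := by
  decide

set_option maxRecDepth 100000 in
theorem triple_compl : ∀ a x b : Fin 8,
    OTtriple ⟨7 - a.val, by omega⟩ ⟨7 - x.val, by omega⟩ ⟨7 - b.val, by omega⟩ ↔
      OTtriple a x b := by
  decide +kernel

theorem complW_invol (m : ℕ) : Function.Involutive (@complW m) := by
  intro w
  funext i
  apply Fin.ext
  simp only [complW]
  omega

theorem complW_adm {m : ℕ} (w : Fin m → Fin 8) : OTadm (complW w) ↔ OTadm w := by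
  simp only [OTadm, complW, pair_compl, triple_compl]

theorem compl_involutive_preserves_admissible_and_counts (m : ℕ) :
    Function.Involutive (@complW m) ∧
    (∀ w : Fin m → Fin 8, OTadm (complW w) ↔ OTadm w) ∧
    (∀ (h : 1 ≤ m) (ℓ : Fin 8),
      (Finset.univ.filter (fun w : Fin m → Fin 8 =>
          OTadm w ∧ w ⟨0, h⟩ = ℓ)).card =
      (Finset.univ.filter (fun w : Fin m → Fin 8 =>
          OTadm w ∧ w ⟨0, h⟩ = ⟨7 - ℓ.val, by omega⟩)).card) := by
  refine ⟨complW_invol m, complW_adm, ?_⟩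
  intro h ℓ
  refine Finset.card_bij' (fun w _ => complW w) (fun w _ => complW w) ?_ ?_
    (fun w _ => complW_invol m w) (fun w _ => complW_invol m w)
  · intro w hw
    simp only [Finset.mem_filter, Finset.mem_univ, true_and] at hw ⊢
    refine ⟨(complW_adm w).2 hw.1, ?_⟩
    simp only [complW, hw.2]
  · intro w hw
    simp only [Finset.mem_filter, Finset.mem_univ, true_and] at hw ⊢
    refine ⟨(complW_adm w).2 hw.1, ?_⟩
    apply Fin.ext
    simp only [complW, hw.2]
    omega

end OTLOCO
end

section
/- Let N8₀(m) denote the number of OT-admissible words of length m whose leftmost symbol equals 0. For every m ≥ 3, one has N8₀(m) = 4·N8₀(m−1) + (3/2)·N8(m−2). -/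
namespace OTLOCO

/-- Number of OT-admissible words of length `m` whose leftmost symbol is `0`. -/
def N80 (m : ℕ) : ℕ :=
  (Finset.univ.filter (fun w : Fin m → Fin 8 =>
    OTadm w ∧ ∀ i : Fin m, (i : ℕ) = 0 → w i = 0)).card

def gg : ℕ → Fin 8 → Fin 8 → ℕ
  | 0, a, b => if OTpair a b then 0 else 1
  | n + 1, a, b => if OTpair a b then 0 else ∑ c, if OTtriple a b c then 0 else gg n b c

def ff : ℕ → Fin 8 → ℕ
  | 0, _ => 1
  | n + 1, a => ∑ b, gg n a b

theorem sum_words {n : ℕ} (F : (Fin (n + 1) → Fin 8) → ℕ) :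
    ∑ w, F w = ∑ a, ∑ w : Fin n → Fin 8, F (Fin.cons a w) := by
  rw [← Fintype.sum_prod_type']
  exact (Fintype.sum_equiv (Fin.consEquiv (fun _ : Fin (n + 1) => Fin 8)) _ _ (fun p => rfl)).symm

theorem adm_cons3 {n : ℕ} (a b c : Fin 8) (w : Fin n → Fin 8) :
    OTadm (Fin.cons a (Fin.cons b (Fin.cons c w : Fin (n+1) → Fin 8) : Fin (n+2) → Fin 8)
        : Fin (n+3) → Fin 8) ↔
      ¬ OTpair a b ∧ ¬ OTtriple a b c ∧
      OTadm (Fin.cons b (Fin.cons c w : Fin (n+1) → Fin 8) : Fin (n+2) → Fin 8) := by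
  constructor
  · rintro ⟨h1, h2⟩
    refine ⟨h1 0 1 (by simp), h2 0 1 2 (by simp) (by simp), ?_, ?_⟩
    · intro i j h
      exact h1 i.succ j.succ (by simp [h])
    · intro i j k h h'
      exact h2 i.succ j.succ k.succ (by simp [h]) (by simp [h'])
  · rintro ⟨hp, ht, h1, h2⟩
    constructor
    · intro i j h
      obtain ⟨j, rfl⟩ := Fin.exists_succ_eq.2 (show j ≠ 0 by rintro rfl; simp at h)
      induction i using Fin.cases with
      | zero =>
        obtain rfl : j = 0 := by ext; simpa using h
        exact hp
      | succ i => exact h1 i j (by simpa using h)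
    · intro i j k h h'
      obtain ⟨j, rfl⟩ := Fin.exists_succ_eq.2 (show j ≠ 0 by rintro rfl; simp at h)
      obtain ⟨k, rfl⟩ := Fin.exists_succ_eq.2 (show k ≠ 0 by rintro rfl; simp at h')
      induction i using Fin.cases with
      | zero =>
        obtain rfl : j = 0 := by ext; simpa using h
        obtain rfl : k = 1 := by ext; simpa using h'
        exact ht
      | succ i =>
        simp only [Fin.val_succ] at h h'
        exact h2 i j k (by omega) (by omega)

theorem gg_eq (n : ℕ) : ∀ a b : Fin 8, gg n a b = ∑ w : Fin n → Fin 8,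
    if OTadm (Fin.cons a (Fin.cons b w : Fin (n+1) → Fin 8) : Fin (n+2) → Fin 8)
      then 1 else 0 := by
  induction n with
  | zero =>
    intro a b
    rw [Fintype.sum_unique, gg]
    have this (w : Fin 0 → Fin 8) : OTadm (Fin.cons a (Fin.cons b w : Fin 1 → Fin 8)
        : Fin 2 → Fin 8) ↔ ¬ OTpair a b := by
      constructor
      · intro h
        exact h.1 0 1 rfl
      · intro h
        constructor
        · intro i j hij
          obtain rfl : i = 0 := by ext; simp; omega
          obtain rfl : j = 1 := by ext; simpa using hij
          exact h
        · intro i j k h1 h2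
          omega
    by_cases h : OTpair a b
    · rw [if_pos h]
      exact (if_neg fun h' => (this _).1 h' h).symm
    · rw [if_neg h]
      exact (if_pos ((this _).2 h)).symm
  | succ n ih =>
    intro a b
    rw [sum_words, gg]
    simp only [adm_cons3, ih]
    by_cases h : OTpair a b
    · simp [h]
    · simp only [h, if_false, not_false_eq_true, true_and]
      refine Finset.sum_congr rfl fun c _ => ?_
      by_cases h' : OTtriple a b c <;> simp [h']

theorem ff_eq (n : ℕ) (a : Fin 8) : ff n a = ∑ w : Fin n → Fin 8,
    if OTadm (Fin.cons a w : Fin (n+1) → Fin 8) then 1 else 0 := by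
  cases n with
  | zero =>
    rw [Fintype.sum_unique, ff, if_pos]
    constructor
    · intro i j h
      omega
    · intro i j k h
      omega
  | succ n =>
    rw [sum_words, ff]
    simp only [gg_eq]

theorem N8_eq_s5 (n : ℕ) : N8 (n + 1) = ∑ a, ff n a := by
  rw [N8, if_neg (by omega), Finset.card_filter, sum_words]
  simp only [ff_eq]

theorem N80_eq (n : ℕ) : N80 (n + 1) = ff n 0 := by
  rw [N80, Finset.card_filter, sum_words, Finset.sum_eq_single 0]
  · rw [ff_eq]
    refine Finset.sum_congr rfl fun w _ => ?_
    have : ∀ i : Fin (n+1), (i : ℕ) = 0 → (Fin.cons 0 w : Fin (n+1) → Fin 8) i = 0 := by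
      intro i hi
      obtain rfl : i = 0 := by ext; simpa using hi
      rfl
    exact if_congr ⟨fun h => h.1, fun h => ⟨h, this⟩⟩ rfl rfl
  · intro b _ hb
    refine Finset.sum_eq_zero fun w _ => ?_
    rw [if_neg]
    rintro ⟨-, h⟩
    exact hb (h 0 rfl)
  · simp

def cp : Fin 8 → Fin 8 := ![7, 3, 5, 1, 6, 2, 4, 0]

theorem cp_cp : ∀ a, cp (cp a) = a := by decide

def cpE : Fin 8 ≃ Fin 8 := ⟨cp, cp, cp_cp, cp_cp⟩

theorem pair_cp : ∀ a b, OTpair (cp a) (cp b) ↔ OTpair a b := by decide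

theorem triple_cp : ∀ a b c, OTtriple (cp a) (cp b) (cp c) ↔ OTtriple a b c := by decide

theorem gg_cp (n : ℕ) : ∀ a b, gg n (cp a) (cp b) = gg n a b := by
  induction n with
  | zero => intro a b; simp only [gg, pair_cp]
  | succ n ih =>
    intro a b
    simp only [gg, pair_cp]
    congr 1
    rw [← Equiv.sum_comp cpE]
    refine Finset.sum_congr rfl fun c _ => ?_
    change (if OTtriple (cp a) (cp b) (cp c) then 0 else gg n (cp b) (cp c)) = _
    simp only [triple_cp, ih]

theorem ff_cp (n : ℕ) (a : Fin 8) : ff n (cp a) = ff n a := by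
  cases n with
  | zero => rfl
  | succ n =>
    simp only [ff]
    rw [← Equiv.sum_comp cpE]
    exact Finset.sum_congr rfl fun c _ => gg_cp n a c

theorem gg_cl (n : ℕ) (a a' b : Fin 8) (h : ∀ b, OTpair a b ↔ OTpair a' b)
    (h' : ∀ b c, OTtriple a b c ↔ OTtriple a' b c) : gg n a b = gg n a' b := by
  cases n <;> simp only [gg, h, h']

theorem ff_cl (n : ℕ) (a a' : Fin 8) (h : ∀ b, OTpair a b ↔ OTpair a' b)
    (h' : ∀ b c, OTtriple a b c ↔ OTtriple a' b c) : ff n a = ff n a' := by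
  cases n
  · rfl
  · simp only [ff]
    exact Finset.sum_congr rfl fun c _ => gg_cl _ _ _ _ h h'

theorem gg_free (n : ℕ) (a b : Fin 8) (h : ¬ OTpair a b) (h' : ∀ c, ¬ OTtriple a b c) :
    gg n a b = ff n b := by
  cases n <;> simp [gg, ff, h, h']

theorem gg_bad (n : ℕ) (a b : Fin 8) (h : OTpair a b) : gg n a b = 0 := by
  cases n <;> simp [gg, h]

theorem gg_03 (n : ℕ) (x : Fin 8) (hx : x = 3 ∨ x = 6) :
    gg (n + 1) 0 x = ff n 2 + ff n 3 + ff n 6 + ff n 7 := by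
  rcases hx with rfl | rfl
  · rw [gg, if_neg (by decide), Fin.sum_univ_eight, if_pos (by decide), if_pos (by decide),
      if_neg (by decide), if_neg (by decide), if_pos (by decide), if_neg (by decide),
      if_neg (by decide), if_neg (by decide),
      gg_free n 3 2 (by decide) (by decide), gg_free n 3 3 (by decide) (by decide),
      gg_bad n 3 5 (by decide), gg_free n 3 6 (by decide) (by decide),
      gg_free n 3 7 (by decide) (by decide)]
    ring
  · rw [gg, if_neg (by decide), Fin.sum_univ_eight, if_pos (by decide), if_pos (by decide),
      if_neg (by decide), if_neg (by decide), if_pos (by decide), if_neg (by decide),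
      if_neg (by decide), if_neg (by decide),
      gg_free n 6 2 (by decide) (by decide), gg_free n 6 3 (by decide) (by decide),
      gg_bad n 6 5 (by decide), gg_free n 6 6 (by decide) (by decide),
      gg_free n 6 7 (by decide) (by decide)]
    ring

theorem ff_5 (n : ℕ) : ff (n + 1) 5 = ff n 0 + ff n 1 + ff n 4 + ff n 5 := by
  rw [ff, Fin.sum_univ_eight, gg_free n 5 0 (by decide) (by decide),
    gg_free n 5 1 (by decide) (by decide), gg_free n 5 4 (by decide) (by decide),
    gg_free n 5 5 (by decide) (by decide), gg_bad n 5 2 (by decide), gg_bad n 5 3 (by decide),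
    gg_bad n 5 6 (by decide), gg_bad n 5 7 (by decide)]
  ring

theorem ff_0 (n : ℕ) : ff (n + 2) 0 = ff (n + 1) 0 + ff (n + 1) 1 + ff (n + 1) 4 + ff (n + 1) 5
    + ff (n + 1) 7 + 2 * (ff n 2 + ff n 3 + ff n 6 + ff n 7) := by
  rw [ff, Fin.sum_univ_eight, gg_free _ 0 0 (by decide) (by decide),
    gg_free _ 0 1 (by decide) (by decide), gg_free _ 0 4 (by decide) (by decide),
    gg_free _ 0 5 (by decide) (by decide), gg_free _ 0 7 (by decide) (by decide),
    gg_bad _ 0 2 (by decide), gg_03 n 3 (Or.inl rfl), gg_03 n 6 (Or.inr rfl)]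
  ring

theorem N80_recursion (m : ℕ) (hm : 3 ≤ m) :
    (N80 m : ℚ) = 4 * (N80 (m - 1) : ℚ) + (3 / 2) * (N8 (m - 2) : ℚ) := by
  obtain ⟨k, rfl⟩ : ∃ k, m = k + 3 := ⟨m - 3, by omega⟩
  rw [show k + 3 - 1 = (k + 1) + 1 by omega, show k + 3 - 2 = k + 1 by omega,
    N80_eq (k + 2), N80_eq (k + 1), N8_eq_s5 k, ff_0, ff_5, Fin.sum_univ_eight]
  have e1 : ∀ n, ff n 1 = ff n 0 := fun n => ff_cl n 1 0 (by decide) (by decide)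
  have e4 : ∀ n, ff n 4 = ff n 0 := fun n => ff_cl n 4 0 (by decide) (by decide)
  have e7 : ∀ n, ff n 7 = ff n 0 := fun n => ff_cp n 0
  have e3 : ∀ n, ff n 3 = ff n 0 := fun n => (ff_cp n 1).trans (e1 n)
  have e6 : ∀ n, ff n 6 = ff n 0 := fun n => (ff_cp n 4).trans (e4 n)
  have e2 : ∀ n, ff n 2 = ff n 5 := fun n => ff_cp n 5
  simp only [e1, e2, e3, e4, e6, e7]
  push_cast
  ring

end OTLOCO
end

section
/- For every m ≥ 1, the number of OT-admissible words of length m whose leftmost symbol lies in B1 = {0,1,4,5} equals N8(m)/2, and the number of OT-admissible words of length m whose leftmost symbol lies in B2 = {2,3,6,7} also equals N8(m)/2. -/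
namespace OTLOCO

theorem pair_rev : ∀ a b : Fin 8, OTpair a.rev b.rev ↔ OTpair a b := by decide

theorem triple_rev : ∀ a x b : Fin 8, OTtriple a.rev x.rev b.rev ↔ OTtriple a x b := by decide

theorem B2_rev : ∀ a : Fin 8, a.rev ∈ B2 ↔ a ∈ B1 := by decide

theorem B1_rev : ∀ a : Fin 8, a.rev ∈ B1 ↔ a ∈ B2 := by decide

theorem not_B1 : ∀ a : Fin 8, a ∉ B1 ↔ a ∈ B2 := by decide

theorem adm_rev {m : ℕ} (w : Fin m → Fin 8) : OTadm (fun i => (w i).rev) ↔ OTadm w := by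
  simp only [OTadm, pair_rev, triple_rev]

theorem leftmost_in_B1_B2_counts (m : ℕ) (hm : 1 ≤ m) :
    (((Finset.univ.filter (fun w : Fin m → Fin 8 =>
        OTadm w ∧ w ⟨0, hm⟩ ∈ B1)).card : ℚ) = (N8 m : ℚ) / 2) ∧
    (((Finset.univ.filter (fun w : Fin m → Fin 8 =>
        OTadm w ∧ w ⟨0, hm⟩ ∈ B2)).card : ℚ) = (N8 m : ℚ) / 2) := by
  have h1 : (Finset.univ.filter (fun w : Fin m → Fin 8 => OTadm w ∧ w ⟨0, hm⟩ ∈ B1)).card =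
      (Finset.univ.filter (fun w : Fin m → Fin 8 => OTadm w ∧ w ⟨0, hm⟩ ∈ B2)).card := by
    refine Finset.card_bij' (fun w _ i => (w i).rev) (fun w _ i => (w i).rev) ?_ ?_ ?_ ?_
    · intro w hw
      simpa [adm_rev, B2_rev] using hw
    · intro w hw
      simpa [adm_rev, B1_rev] using hw
    · intro w hw
      simp
    · intro w hw
      simp
  have h2 : (Finset.univ.filter (fun w : Fin m → Fin 8 => OTadm w ∧ w ⟨0, hm⟩ ∈ B1)).card +
      (Finset.univ.filter (fun w : Fin m → Fin 8 => OTadm w ∧ w ⟨0, hm⟩ ∈ B2)).card = N8 m := by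
    have h := Finset.card_filter_add_card_filter_not
      (s := Finset.univ.filter (fun w : Fin m → Fin 8 => OTadm w))
      (fun w : Fin m → Fin 8 => w ⟨0, hm⟩ ∈ B1)
    simp only [Finset.filter_filter, not_B1] at h
    rw [h, N8, if_neg (by omega)]
  rw [← h2, h1]
  push_cast
  constructor <;> ring

end OTLOCO
end

section
/- For every integer m ≥ 3, the number of ST-admissible words of length m over Fin 4 satisfies the recursion N4(m) = 2·N4(m−1) + N4(m−2); moreover N4(1) = 4 and N4(2) = 10 (so that the recursion also holds at m = 2 with the convention N4(0) = 2). -/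
namespace STLOCO

/-- Forbidden 2-tuples of `ST⁴`, read left-to-right. -/
def STpair (a b : Fin 4) : Prop :=
  (a = 0 ∧ b = 1) ∨ (a = 1 ∧ b = 0) ∨ (a = 1 ∧ b = 2) ∨
  (a = 2 ∧ b = 1) ∨ (a = 2 ∧ b = 3) ∨ (a = 3 ∧ b = 2)

/-- Forbidden 3-tuples of `ST⁴`, read left-to-right. -/
def STtriple (a x b : Fin 4) : Prop :=
  (a = 0 ∧ x = 3 ∧ b = 0) ∨ (a = 3 ∧ x = 0 ∧ b = 3)

instance (a b : Fin 4) : Decidable (STpair a b) := by unfold STpair; infer_instance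
instance (a x b : Fin 4) : Decidable (STtriple a x b) := by unfold STtriple; infer_instance

/-- A word `w : Fin m → Fin 4` (index `0` is the leftmost symbol) is ST-admissible. -/
def STadm {m : ℕ} (w : Fin m → Fin 4) : Prop :=
  (∀ i j : Fin m, (j : ℕ) = (i : ℕ) + 1 → ¬ STpair (w i) (w j)) ∧
  (∀ i j k : Fin m, (j : ℕ) = (i : ℕ) + 1 → (k : ℕ) = (i : ℕ) + 2 →
    ¬ STtriple (w i) (w j) (w k))

instance {m : ℕ} : DecidablePred (@STadm m) := fun w => by
  unfold STadm; infer_instance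

/-- Number of ST-admissible words of length `m`, with the convention `N4 0 = 2`. -/
def N4 (m : ℕ) : ℕ :=
  if m = 0 then 2
  else (Finset.univ.filter (fun w : Fin m → Fin 4 => STadm w)).card
lemma adm_step {m : ℕ} (a b c : Fin 4) (w : Fin m → Fin 4) :
    STadm (Fin.cons a (Fin.cons b (Fin.cons c w : Fin (m+1) → Fin 4) : Fin (m+2) → Fin 4)
      : Fin (m+3) → Fin 4) ↔
    (¬ STpair a b ∧ ¬ STtriple a b c) ∧
      STadm (Fin.cons b (Fin.cons c w : Fin (m+1) → Fin 4) : Fin (m+2) → Fin 4) := by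
  constructor
  · rintro ⟨h1, h2⟩
    refine ⟨⟨h1 0 1 (by simp), h2 0 1 2 (by simp) (by simp)⟩, ?_, ?_⟩
    · intro i j hij
      have := h1 i.succ j.succ (by simp [hij])
      simpa only [Fin.cons_succ] using this
    · intro i j k hij hik
      have := h2 i.succ j.succ k.succ (by simp [hij]) (by simp [hik])
      simpa only [Fin.cons_succ] using this
  · rintro ⟨⟨p, t⟩, h1, h2⟩
    refine ⟨?_, ?_⟩
    · intro i j hij
      obtain ⟨j, rfl⟩ := Fin.exists_succ_eq.2 (show j ≠ 0 by rintro rfl; simp at hij)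
      rcases Fin.eq_zero_or_eq_succ i with rfl | ⟨i, rfl⟩
      · have : j = 0 := by ext; simpa using hij
        subst this
        exact p
      · simp only [Fin.cons_succ]
        exact h1 i j (by simpa using hij)
    · intro i j k hij hik
      obtain ⟨j, rfl⟩ := Fin.exists_succ_eq.2 (show j ≠ 0 by rintro rfl; simp at hij)
      obtain ⟨k, rfl⟩ := Fin.exists_succ_eq.2 (show k ≠ 0 by rintro rfl; simp at hik)
      rcases Fin.eq_zero_or_eq_succ i with rfl | ⟨i, rfl⟩
      · have : j = 0 := by ext; simpa using hij
        subst this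
        have : k = 1 := by ext; simpa using hik
        subst this
        exact t
      · simp only [Fin.cons_succ]
        exact h2 i j k (by simpa using hij) (by simp only [Fin.val_succ] at hik; omega)

def cnt (m : ℕ) (a b : Fin 4) : ℕ :=
  ∑ w : Fin m → Fin 4,
    if STadm (Fin.cons a (Fin.cons b w : Fin (m+1) → Fin 4) : Fin (m+2) → Fin 4) then 1 else 0

lemma sum_cons {m : ℕ} (f : (Fin (m+1) → Fin 4) → ℕ) :
    ∑ w, f w = ∑ a : Fin 4, ∑ w : Fin m → Fin 4, f (Fin.cons a w) := by
  rw [← (Fin.consEquiv (fun _ : Fin (m+1) => Fin 4)).sum_comp, Fintype.sum_prod_type]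
  rfl

lemma cnt_succ (m : ℕ) (a b : Fin 4) :
    cnt (m+1) a b = ∑ c : Fin 4, if ¬ STpair a b ∧ ¬ STtriple a b c then cnt m b c else 0 := by
  unfold cnt
  rw [sum_cons]
  refine Finset.sum_congr rfl fun c _ => ?_
  simp only [adm_step]
  split_ifs with h
  · simp [h]
  · simp [h]

lemma N4_eq (m : ℕ) : N4 (m+2) = ∑ a : Fin 4, ∑ b : Fin 4, cnt m a b := by
  unfold N4 cnt
  rw [if_neg (by omega), Finset.card_filter, sum_cons]
  simp only [sum_cons]

lemma cnt_zero (a b : Fin 4) : cnt 0 a b = if STpair a b then 0 else 1 := by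
  revert a b; decide

lemma cnt_vals (m : ℕ) : ∃ u v : ℕ, ∀ a b : Fin 4, cnt m a b =
    if STpair a b then 0 else if (b = 0 ∧ a ≠ 3) ∨ (b = 3 ∧ a ≠ 0) then u else v := by
  induction m with
  | zero => exact ⟨1, 1, fun a b => by rw [cnt_zero]; simp⟩
  | succ m ih =>
    obtain ⟨u, v, h⟩ := ih
    refine ⟨u + 2 * v, u + v, fun a b => ?_⟩
    rw [cnt_succ]
    simp only [h, Fin.sum_univ_four]
    fin_cases a <;> fin_cases b <;> simp [STpair, STtriple] <;> ring

theorem N4_recursion :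
    (∀ m : ℕ, 2 ≤ m → N4 m = 2 * N4 (m - 1) + N4 (m - 2)) ∧
    N4 1 = 4 ∧ N4 2 = 10 := by
  have h1 : N4 1 = 4 := by decide
  have h2 : N4 2 = 10 := by decide
  have h3 : N4 3 = 24 := by
    rw [N4_eq 1]; simp only [cnt_succ, cnt_zero]; decide
  refine ⟨?_, h1, h2⟩
  intro m hm
  match m, hm with
  | 2, _ => rw [h2, h1]; rfl
  | 3, _ => rw [h3, h2, h1]
  | m+4, _ =>
    show N4 (m+2+2) = 2 * N4 (m+1+2) + N4 (m+2)
    obtain ⟨u, v, h⟩ := cnt_vals m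
    simp only [N4_eq, cnt_succ, h, Fin.sum_univ_four]
    simp [STpair, STtriple]
    ring

end STLOCO
end

section
/- Let A be a 3×m binary array and let u be its upper-pair sequence. If u is ST-admissible, then no column j with 1 ≤ j ≤ m−2 is an RTIS center, regardless of the entries of the lower row A(2,·). -/
namespace STLOCO

/-- The upper-pair sequence of a `3 × m` binary array: `u j = 2·A(0,j) + A(1,j)`. -/
def upperPair {m : ℕ} (A : Fin 3 → Fin m → Fin 2) (j : Fin m) : Fin 4 :=
  ⟨2 * (A 0 j).val + (A 1 j).val, by
    have h0 := (A 0 j).isLt; have h1 := (A 1 j).isLt; omega⟩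

/-- Column `j` (with `1 ≤ j ≤ m − 2`) is an RTIS center if at least `3` of the four
entries `A(0,j), A(2,j), A(1,j−1), A(1,j+1)` equal `1 − A(1,j)`. -/
def isRTIScenter {m : ℕ} (A : Fin 3 → Fin m → Fin 2) (j : ℕ)
    (h1 : 1 ≤ j) (h2 : j + 2 ≤ m) : Prop :=
  3 ≤ ((if A 0 ⟨j, by omega⟩ = 1 - A 1 ⟨j, by omega⟩ then 1 else 0) +
       (if A 2 ⟨j, by omega⟩ = 1 - A 1 ⟨j, by omega⟩ then 1 else 0) +
       (if A 1 ⟨j - 1, by omega⟩ = 1 - A 1 ⟨j, by omega⟩ then 1 else 0) +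
       (if A 1 ⟨j + 1, by omega⟩ = 1 - A 1 ⟨j, by omega⟩ then 1 else 0) : ℕ)

set_option synthInstance.maxSize 10000 in
set_option synthInstance.maxHeartbeats 1000000 in
set_option maxRecDepth 100000 in
set_option maxHeartbeats 1000000 in
theorem rtis_aux : ∀ a0 a1 b0 b1 c0 c1 l : Fin 2, ∀ a b c : Fin 4,
    a.val = 2 * a0.val + a1.val → b.val = 2 * b0.val + b1.val →
    c.val = 2 * c0.val + c1.val →
    ¬ STpair a b → ¬ STpair b c → ¬ STtriple a b c →
    ¬ 3 ≤ ((if b0 = 1 - b1 then 1 else 0) + (if l = 1 - b1 then 1 else 0) +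
       (if a1 = 1 - b1 then 1 else 0) + (if c1 = 1 - b1 then 1 else 0) : ℕ) := by
  intro a0 a1 b0 b1 c0 c1 l a b c ha hb hc
  simp only [STpair, STtriple, Fin.ext_iff, ha, hb, hc]
  clear ha hb hc a b c
  revert a0 a1 b0 b1 c0 c1 l
  decide

theorem st_admissible_no_rtis_center (m : ℕ) (A : Fin 3 → Fin m → Fin 2)
    (hA : STadm (fun j => upperPair A j)) :
    ∀ (j : ℕ) (h1 : 1 ≤ j) (h2 : j + 2 ≤ m), ¬ isRTIScenter A j h1 h2 := by
  intro j h1 h2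
  exact rtis_aux (A 0 ⟨j - 1, by omega⟩) (A 1 ⟨j - 1, by omega⟩) (A 0 ⟨j, by omega⟩)
    (A 1 ⟨j, by omega⟩) (A 0 ⟨j + 1, by omega⟩) (A 1 ⟨j + 1, by omega⟩) (A 2 ⟨j, by omega⟩)
    _ _ _ rfl rfl rfl
    (hA.1 ⟨j - 1, by omega⟩ ⟨j, by omega⟩ (by simp only []; omega))
    (hA.1 ⟨j, by omega⟩ ⟨j + 1, by omega⟩ rfl)
    (hA.2 ⟨j - 1, by omega⟩ ⟨j, by omega⟩ ⟨j + 1, by omega⟩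
      (by simp only []; omega) (by simp only []; omega))

end STLOCO
end

section
/- For every m ≥ 3, the number of ST-admissible words of length m whose leftmost symbol equals 0 is exactly (N4(m−1) + N4(m−2))/2. -/
namespace STLOCO

theorem adm_cons {n : ℕ} (a : Fin 4) (w : Fin (n+1) → Fin 4) :
    STadm (Fin.cons a w : Fin (n+2) → Fin 4) ↔
      STadm w ∧ ¬ STpair a (w 0) ∧ ∀ k : Fin (n+1), (k : ℕ) = 1 → ¬ STtriple a (w 0) (w k) := by
  constructor
  · rintro ⟨h1, h2⟩
    refine ⟨⟨fun i j hij => ?_, fun i j k hij hik => ?_⟩, ?_, fun k hk => ?_⟩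
    · simpa using h1 i.succ j.succ (by simp; omega)
    · simpa using h2 i.succ j.succ k.succ (by simp; omega) (by simp; omega)
    · simpa using h1 0 (Fin.succ 0) (by simp)
    · simpa using h2 0 (Fin.succ 0) k.succ (by simp) (by simp; omega)
  · rintro ⟨⟨h1, h2⟩, h3, h4⟩
    refine ⟨fun i j hij => ?_, fun i j k hij hik => ?_⟩
    · obtain ⟨j, rfl⟩ := Fin.exists_succ_eq.2 (show j ≠ 0 by rintro rfl; simp at hij)
      refine Fin.cases (fun hij => ?_) (fun i hij => ?_) i hij
      · have : j = 0 := by ext; simpa using hij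
        subst this; simpa using h3
      · simpa using h1 i j (by simpa using hij)
    · obtain ⟨j, rfl⟩ := Fin.exists_succ_eq.2 (show j ≠ 0 by rintro rfl; simp at hij)
      obtain ⟨k, rfl⟩ := Fin.exists_succ_eq.2 (show k ≠ 0 by rintro rfl; simp at hik)
      revert hij hik
      refine Fin.cases (fun hij hik => ?_) (fun i hij hik => ?_) i
      · have : j = 0 := by ext; simpa using hij
        subst this; simpa using h4 k (by simpa using hik)
      · simpa using h2 i j k (by simpa using hij) (by simp at hik; omega)

theorem card_cons {n : ℕ} (a : Fin 4) (P : (Fin (n+2) → Fin 4) → Prop)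
    (Q : (Fin (n+1) → Fin 4) → Prop) [DecidablePred P] [DecidablePred Q]
    (h : ∀ u, P (Fin.cons a u) ↔ Q u) (h0 : ∀ w, P w → w 0 = a) :
    (Finset.univ.filter P).card = (Finset.univ.filter Q).card := by
  symm
  refine Finset.card_bij (fun u _ => (Fin.cons a u : Fin (n+2) → Fin 4)) ?_ ?_ ?_
  · intro u hu; simp at hu ⊢; exact (h u).2 hu
  · intro u _ v _ e; exact (Fin.cons_injective2 e).2
  · intro w hw
    simp only [Finset.mem_filter, Finset.mem_univ, true_and] at hw
    have e : (Fin.cons a (Fin.tail w) : Fin (n+2) → Fin 4) = w := by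
      rw [← h0 w hw]; exact Fin.cons_self_tail w
    refine ⟨Fin.tail w, ?_, e⟩
    simp only [Finset.mem_filter, Finset.mem_univ, true_and]
    rw [← h, e]; exact hw

/-- words starting with a given symbol -/
def A (n : ℕ) (a : Fin 4) : ℕ :=
  (Finset.univ.filter (fun w : Fin (n+1) → Fin 4 => STadm w ∧ w 0 = a)).card

theorem pair_rev : ∀ a b, STpair (Fin.rev a) (Fin.rev b) ↔ STpair a b := by decide
theorem triple_rev : ∀ a b c, STtriple (Fin.rev a) (Fin.rev b) (Fin.rev c) ↔ STtriple a b c := by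
  decide

theorem adm_rev {m : ℕ} (w : Fin m → Fin 4) : STadm (fun i => Fin.rev (w i)) ↔ STadm w := by
  simp only [STadm, pair_rev, triple_rev]

theorem A_rev (n : ℕ) (a : Fin 4) : A n (Fin.rev a) = A n a := by
  unfold A
  refine Finset.card_nbij' (fun w i => Fin.rev (w i)) (fun w i => Fin.rev (w i)) ?_ ?_ ?_ ?_
  · intro w hw
    simp at hw ⊢
    exact ⟨(adm_rev w).2 hw.1, by rw [hw.2, Fin.rev_rev]⟩
  · intro w hw
    simp at hw ⊢
    exact ⟨(adm_rev w).2 hw.1, hw.2⟩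
  · intro w _; simp
  · intro w _; simp

theorem N4_eq_s14 (n : ℕ) : N4 (n+1) = 2 * (A n 0 + A n 2) := by
  have h3 : A n 3 = A n 0 := A_rev n 0
  have h1 : A n 1 = A n 2 := A_rev n 2
  have : N4 (n+1) = ∑ a : Fin 4, A n a := by
    simp only [N4, A, Nat.succ_ne_zero, if_false]
    rw [Finset.card_eq_sum_card_fiberwise (f := fun w => w 0) (t := Finset.univ) (by intro; simp)]
    simp only [Finset.filter_filter]
  rw [this, Fin.sum_univ_four]; omega

theorem fact1 : ∀ a b : Fin 4, ¬ STpair a b → ((¬ STpair 0 a ∧ ¬ STtriple 0 a b) ↔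
    (a = 0 ∨ a = 2 ∨ (a = 3 ∧ b ≠ 0))) := by decide
theorem fact2 : ∀ a : Fin 4, (¬ STpair 3 a ∧ a ≠ 0) ↔ (a = 1 ∨ a = 3) := by decide
theorem fact3 : ∀ a b : Fin 4, a ≠ 0 → ¬ STtriple 3 a b := by decide

theorem A_rec (n : ℕ) : A (n+2) 0 = A (n+1) 0 + A (n+1) 2 + (A n 1 + A n 3) := by
  have e1 : A (n+2) 0 = (Finset.univ.filter (fun w : Fin (n+2) → Fin 4 =>
      (STadm w ∧ w 0 = 0) ∨ (STadm w ∧ w 0 = 2) ∨ (STadm w ∧ w 0 = 3 ∧ w 1 ≠ 0))).card := by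
    refine card_cons 0 _ _ (fun u => ?_) (fun w h => h.2)
    rw [adm_cons]
    have hk : (∀ k : Fin (n+2), (k : ℕ) = 1 → ¬ STtriple 0 (u 0) (u k)) ↔
        ¬ STtriple 0 (u 0) (u 1) := by
      constructor
      · intro h; exact h 1 (by simp)
      · intro h k hk
        have : k = 1 := by ext; simpa using hk
        rwa [this]
    rw [hk]
    have := fun h : STadm u => fact1 (u 0) (u 1) (h.1 0 1 (by simp))
    simp only [Fin.cons_zero, and_true]
    tauto
  have e2 : (Finset.univ.filter (fun w : Fin (n+2) → Fin 4 =>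
      STadm w ∧ w 0 = 3 ∧ w 1 ≠ 0)).card = (Finset.univ.filter (fun w : Fin (n+1) → Fin 4 =>
      (STadm w ∧ w 0 = 1) ∨ (STadm w ∧ w 0 = 3))).card := by
    refine card_cons 3 _ _ (fun u => ?_) (fun w h => h.2.1)
    rw [adm_cons]
    have h1 : (Fin.cons 3 u : Fin (n+2) → Fin 4) 1 = u 0 := Fin.cons_succ (α := fun _ => Fin 4) 3 u 0
    rw [h1]
    have := fact2 (u 0)
    have := fun (h : u 0 ≠ 0) (k : Fin (n+1)) (_ : (k:ℕ) = 1) => fact3 (u 0) (u k) h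
    simp only [Fin.cons_zero, true_and]
    tauto
  rw [e1, Finset.filter_or, Finset.card_union_of_disjoint, Finset.filter_or,
    Finset.card_union_of_disjoint, e2, Finset.filter_or, Finset.card_union_of_disjoint]
  · exact (Nat.add_assoc _ _ _).symm
  · rw [Finset.disjoint_filter]; rintro w - ⟨_, h⟩ ⟨_, h'⟩; rw [h] at h'; exact absurd h' (by decide)
  · rw [Finset.disjoint_filter]; rintro w - ⟨_, h⟩ ⟨_, h', _⟩; rw [h] at h'; exact absurd h' (by decide)
  · rw [Finset.disjoint_filter]
    rintro w - ⟨_, h⟩ (⟨_, h'⟩ | ⟨_, h', _⟩) <;> rw [h] at h' <;> exact absurd h' (by decide)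

theorem st_leftmost_zero_count (m : ℕ) (hm : 3 ≤ m) :
    (((Finset.univ.filter (fun w : Fin m → Fin 4 =>
        STadm w ∧ w ⟨0, by omega⟩ = (0 : Fin 4))).card : ℚ) =
      ((N4 (m - 1) : ℚ) + (N4 (m - 2) : ℚ)) / 2) := by
  obtain ⟨n, rfl⟩ : ∃ n, m = n + 3 := ⟨m - 3, by omega⟩
  have h := A_rec n
  have h3 : A n 3 = A n 0 := A_rev n 0
  have h1 : A n 1 = A n 2 := A_rev n 2
  rw [show n + 3 - 1 = (n + 1) + 1 from rfl, show n + 3 - 2 = n + 1 from rfl, N4_eq_s14, N4_eq_s14]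
  have e : (Finset.univ.filter (fun w : Fin (n+3) → Fin 4 =>
      STadm w ∧ w ⟨0, by omega⟩ = (0 : Fin 4))).card = A (n+2) 0 := rfl
  rw [e, h, h3, h1]
  push_cast
  ring

end STLOCO
end

section
/- Define the pattern families T1 = {(2,b), (b,2) : b ∈ B1}, T2 = {(5,b), (b,5) : b ∈ B2}, T3 = {(a,x,b) : a,b ∈ B1, x ∈ {2,3,6}}, and T4 = {(a,x,b) : a,b ∈ B2, x ∈ {1,4,5}}. Then for every word w over Fin 8, w contains an element of T1 ∪ T2 ∪ T3 ∪ T4 as a contiguous subword if and only if w contains an element of OT⁸ as a contiguous subword; that is, forbidding the minimal first-offender set OT⁸ forbids exactly the words containing some rotated-T isolation pattern family member. -/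
namespace OTLOCO

/-- `w` contains the 2-tuple `(a, b)` (read left-to-right) as a contiguous subword. -/
def containsPair {m : ℕ} (w : Fin m → Fin 8) (a b : Fin 8) : Prop :=
  ∃ i j : Fin m, (j : ℕ) = (i : ℕ) + 1 ∧ w i = a ∧ w j = b

/-- `w` contains the 3-tuple `(a, x, b)` (read left-to-right) as a contiguous subword. -/
def containsTriple {m : ℕ} (w : Fin m → Fin 8) (a x b : Fin 8) : Prop :=
  ∃ i j k : Fin m, (j : ℕ) = (i : ℕ) + 1 ∧ (k : ℕ) = (i : ℕ) + 2 ∧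
    w i = a ∧ w j = x ∧ w k = b

/-- Containing a pattern of `T1 ∪ T2 ∪ T3 ∪ T4` is equivalent to containing a pattern of
the minimal first-offender set `OT⁸`. -/
theorem rtis_families_iff_first_offenders (m : ℕ) (w : Fin m → Fin 8) :
    ((∃ b ∈ B1, containsPair w 2 b ∨ containsPair w b 2) ∨
     (∃ b ∈ B2, containsPair w 5 b ∨ containsPair w b 5) ∨
     (∃ a ∈ B1, ∃ b ∈ B1, ∃ x ∈ ({2, 3, 6} : Finset (Fin 8)),
        containsTriple w a x b) ∨
     (∃ a ∈ B2, ∃ b ∈ B2, ∃ x ∈ ({1, 4, 5} : Finset (Fin 8)),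
        containsTriple w a x b)) ↔
    ((∃ b ∈ B1, containsPair w 2 b ∨ containsPair w b 2) ∨
     (∃ b ∈ B2, containsPair w 5 b ∨ containsPair w b 5) ∨
     (∃ a ∈ ({0, 1, 4} : Finset (Fin 8)), ∃ b ∈ ({0, 1, 4} : Finset (Fin 8)),
        ∃ x ∈ ({3, 6} : Finset (Fin 8)), containsTriple w a x b) ∨
     (∃ a ∈ ({3, 6, 7} : Finset (Fin 8)), ∃ b ∈ ({3, 6, 7} : Finset (Fin 8)),
        ∃ x ∈ ({1, 4} : Finset (Fin 8)), containsTriple w a x b)) := by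
  constructor
  · rintro (h | h | ⟨a, ha, b, hb, x, hx, i, j, k, hj, hk, h1, h2, h3⟩ |
      ⟨a, ha, b, hb, x, hx, i, j, k, hj, hk, h1, h2, h3⟩)
    · exact Or.inl h
    · exact Or.inr (Or.inl h)
    · by_cases x2 : x = 2
      · subst x2
        exact Or.inl ⟨a, ha, Or.inr ⟨i, j, hj, h1, h2⟩⟩
      have xB : x ∈ B2 := by clear * - hx; revert x; decide
      by_cases a5 : a = 5
      · subst a5
        exact Or.inr (Or.inl ⟨x, xB, Or.inl ⟨i, j, hj, h1, h2⟩⟩)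
      by_cases b5 : b = 5
      · subst b5
        exact Or.inr (Or.inl ⟨x, xB, Or.inr ⟨j, k, by omega, h2, h3⟩⟩)
      refine Or.inr (Or.inr (Or.inl ⟨a, ?_, b, ?_, x, ?_, i, j, k, hj, hk, h1, h2, h3⟩))
      · clear * - ha a5; revert a; decide
      · clear * - hb b5; revert b; decide
      · clear * - hx x2; revert x; decide
    · by_cases x5 : x = 5
      · subst x5
        exact Or.inr (Or.inl ⟨a, ha, Or.inr ⟨i, j, hj, h1, h2⟩⟩)
      have xB : x ∈ B1 := by clear * - hx; revert x; decide
      by_cases a2 : a = 2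
      · subst a2
        exact Or.inl ⟨x, xB, Or.inl ⟨i, j, hj, h1, h2⟩⟩
      by_cases b2 : b = 2
      · subst b2
        exact Or.inl ⟨x, xB, Or.inr ⟨j, k, by omega, h2, h3⟩⟩
      refine Or.inr (Or.inr (Or.inr ⟨a, ?_, b, ?_, x, ?_, i, j, k, hj, hk, h1, h2, h3⟩))
      · clear * - ha a2; revert a; decide
      · clear * - hb b2; revert b; decide
      · clear * - hx x5; revert x; decide
  · rintro (h | h | ⟨a, ha, b, hb, x, hx, h⟩ | ⟨a, ha, b, hb, x, hx, h⟩)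
    · exact Or.inl h
    · exact Or.inr (Or.inl h)
    · refine Or.inr (Or.inr (Or.inl ⟨a, ?_, b, ?_, x, ?_, h⟩))
      · clear * - ha; revert a; decide
      · clear * - hb; revert b; decide
      · clear * - hx; revert x; decide
    · refine Or.inr (Or.inr (Or.inr ⟨a, ?_, b, ?_, x, ?_, h⟩))
      · clear * - ha; revert a; decide
      · clear * - hb; revert b; decide
      · clear * - hx; revert x; decide

end OTLOCO
end
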